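/- Let ω = Σ_{i=1}^l m_i α_i be a minuscule weight whose coefficients m_i are nonnegative rationals, I = {α ∈ S : ⟨ω, α∨⟩ = 0} and W^I = {w ∈ W : w(α) > 0 for all α ∈ I}. Then there exists a unique w ∈ W^I such that w(ω) = Σ_{i=1}^l (m_i − ⌈m_i⌉) α_i, where ⌈x⌉ denotes the ceiling of x (⌈x⌉ = x if x is an integer and ⌈x⌉ = ⌊x⌋ + 1 otherwise). -/

import Mathlib

open scoped RealInnerProductSpace

/-- A finite reduced crystallographic root system `Φ` spanning a real inner product
space `V`, together with a fixed base of simple roots `α 0, …, α (l-1)`: every root is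
a nonnegative or nonpositive integral combination of the simple roots.  The simple
reflections `s i` are given by the usual formula `s_α(λ) = λ − ⟨λ, α∨⟩ α`. -/
structure RootSystemWithBase (V : Type*) [NormedAddCommGroup V] [InnerProductSpace ℝ V] where
  l : ℕ
  Φ : Finset V
  α : Fin l → V
  s : Fin l → V ≃ₗ[ℝ] V
  α_mem : ∀ i, α i ∈ Φ
  root_ne_zero : ∀ β ∈ Φ, β ≠ (0 : V)
  root_span : Submodule.span ℝ (Φ : Set V) = ⊤
  simple_indep : LinearIndependent ℝ α
  crystallographic : ∀ β ∈ Φ, ∀ γ ∈ Φ, ∃ z : ℤ, 2 * ⟪β, γ⟫ / ⟪γ, γ⟫ = (z : ℝ)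
  reduced : ∀ β ∈ Φ, ∀ c : ℝ, c • β ∈ Φ → c = 1 ∨ c = -1
  base : ∀ β ∈ Φ,
    (∃ c : Fin l → ℤ, (∀ i, 0 ≤ c i) ∧ β = ∑ i, (c i : ℝ) • α i) ∨
    (∃ c : Fin l → ℤ, (∀ i, 0 ≤ c i) ∧ β = -(∑ i, (c i : ℝ) • α i))
  s_apply : ∀ i v, s i v = v - (2 * ⟪v, α i⟫ / ⟪α i, α i⟫) • α i
  s_root : ∀ β ∈ Φ, ∀ i, s i β ∈ Φ

namespace RootSystemWithBase

variable {V : Type*} [NormedAddCommGroup V] [InnerProductSpace ℝ V]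

/-- The pairing `⟨λ, β∨⟩ = 2(λ,β)/(β,β)`. -/
noncomputable def pairing (_D : RootSystemWithBase V) (lam β : V) : ℝ :=
  2 * ⟪lam, β⟫ / ⟪β, β⟫

/-- The Weyl group: the subgroup of `GL(V)` generated by the simple reflections. -/
def W (D : RootSystemWithBase V) : Subgroup (V ≃ₗ[ℝ] V) := Subgroup.closure (Set.range D.s)

/-- The product `s_{i₁} · s_{i₂} ⋯ s_{i_k}` of simple reflections along a word. -/
def wordProd (D : RootSystemWithBase V) (L : List (Fin D.l)) : V ≃ₗ[ℝ] V := (L.map D.s).prod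

/-- The length `ℓ(w)`: the least `k` such that `w` is a product of `k` simple
reflections. -/
noncomputable def len (D : RootSystemWithBase V) (w : V ≃ₗ[ℝ] V) : ℕ :=
  sInf {k | ∃ L : List (Fin D.l), L.length = k ∧ D.wordProd L = w}

/-- `v` is a linear combination of the simple roots with all coefficients `≥ 0`. -/
def IsNonnegComb (D : RootSystemWithBase V) (v : V) : Prop :=
  ∃ c : Fin D.l → ℝ, (∀ i, 0 ≤ c i) ∧ v = ∑ i, c i • D.α i

/-- `v > 0`: a nonzero nonnegative combination of the simple roots. -/
def IsPos (D : RootSystemWithBase V) (v : V) : Prop := D.IsNonnegComb v ∧ v ≠ 0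

/-- `x ≤ y` for vectors: `y − x` is a nonnegative combination of the simple roots. -/
def vle (D : RootSystemWithBase V) (x y : V) : Prop := D.IsNonnegComb (y - x)

/-- `λ` is dominant: `⟨λ, αᵢ∨⟩ ≥ 0` for all `i`. -/
def IsDominant (D : RootSystemWithBase V) (lam : V) : Prop :=
  ∀ i, 0 ≤ D.pairing lam (D.α i)

/-- `ω` is minuscule: dominant with `⟨ω, β∨⟩ ∈ {−1, 0, 1}` for every root `β`. -/
def IsMinuscule (D : RootSystemWithBase V) (ω : V) : Prop :=
  D.IsDominant ω ∧ ∀ β ∈ D.Φ, D.pairing ω β = -1 ∨ D.pairing ω β = 0 ∨ D.pairing ω β = 1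

/-- `W^I = {w ∈ W : w(α) > 0 for all α ∈ I}` where `I = {α ∈ S : ⟨ω, α∨⟩ = 0}`. -/
def WI (D : RootSystemWithBase V) (ω : V) : Set (V ≃ₗ[ℝ] V) :=
  {w | w ∈ D.W ∧ ∀ i, D.pairing ω (D.α i) = 0 → D.IsPos (w (D.α i))}

/-- `w ≤ τ` in `W`:  `ℓ(τ) = ℓ(w) + ℓ(τ w⁻¹)`. -/
def wle (D : RootSystemWithBase V) (w τ : V ≃ₗ[ℝ] V) : Prop :=
  D.len τ = D.len w + D.len (τ * w⁻¹)

end RootSystemWithBase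

/-! Existence is a descent. As long as `v = w ω` has a positive coefficient, obtuseness of the
simple roots gives an `αⱼ` with positive coefficient and `⟪v, αⱼ⟫ > 0`; minusculeness forces
`⟨v, αⱼ∨⟩ = 1`, so `sⱼ v = v - αⱼ`, and `sⱼ w` stays in `W^I` because `w α ≠ αⱼ` for `α ∈ I`.
Subtracting `αⱼ` does not change the values `xᵢ - ⌈xᵢ⌉` of the coefficients `xᵢ`, and none of
them drops to `-1` or below, so the descent stops exactly at the required vector.

For uniqueness, if `w ω = w' ω` then `u = w⁻¹ w'` fixes `ω`. If `u αᵢ` were negative, dominance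
would make `αᵢ` and `u αᵢ` orthogonal to `ω`, so that `w' αᵢ = w (u αᵢ)` would be both positive
and negative. Hence `u` preserves positivity of the simple roots and `u = 1` by the exchange
property.
-/

section ObtuseFamily

variable {ι E : Type*} [Fintype ι] [NormedAddCommGroup E] [InnerProductSpace ℝ E] {e : ι → E}

theorem inner_sum_negPart_sum_posPart_nonpos (he : Pairwise fun i j => ⟪e i, e j⟫ ≤ 0)
    (x : ι → ℝ) : ⟪∑ i, (x i)⁻ • e i, ∑ j, (x j)⁺ • e j⟫ ≤ 0 := by
  simp only [sum_inner, inner_sum, real_inner_smul_left, real_inner_smul_right]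
  refine Finset.sum_nonpos fun j _ => Finset.sum_nonpos fun i _ => ?_
  obtain rfl | hij := eq_or_ne i j
  · rcases le_total 0 (x i) with hx | hx <;> simp [hx]
  · exact mul_nonpos_of_nonneg_of_nonpos (posPart_nonneg _)
      (mul_nonpos_of_nonneg_of_nonpos (negPart_nonneg _) (he hij))

theorem exists_pos_inner_pos_of_pairwise_inner_nonpos (hli : LinearIndependent ℝ e)
    (he : Pairwise fun i j => ⟪e i, e j⟫ ≤ 0) {x : ι → ℝ} (hx : ∃ i, 0 < x i) :
    ∃ j, 0 < x j ∧ 0 < ⟪∑ i, x i • e i, e j⟫ := by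
  by_contra! hnonpos
  set p := ∑ i, (x i)⁺ • e i with hp
  set q := ∑ i, (x i)⁻ • e i with hq
  have hpq : ∑ i, x i • e i = p - q := by
    simp only [hp, hq, ← Finset.sum_sub_distrib, ← sub_smul, posPart_sub_negPart]
  have hle : ⟪∑ i, x i • e i, p⟫ ≤ 0 := by
    rw [hp, inner_sum]
    refine Finset.sum_nonpos fun j _ => ?_
    rw [real_inner_smul_right]
    rcases le_or_gt (x j) 0 with hj | hj
    · simp [posPart_eq_zero.mpr hj]
    · exact mul_nonpos_of_nonneg_of_nonpos (posPart_nonneg _) (hnonpos j hj)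
  have hp_zero : p = 0 := by
    rw [← real_inner_self_nonpos]
    rw [hpq, inner_sub_left] at hle
    linarith [inner_sum_negPart_sum_posPart_nonpos he x]
  obtain ⟨i, hi⟩ := hx
  exact hi.not_ge (posPart_eq_zero.mp (Fintype.linearIndependent_iff.mp hli _ hp_zero i))

end ObtuseFamily

namespace RootSystemWithBase

variable {V : Type*} [NormedAddCommGroup V] [InnerProductSpace ℝ V] (D : RootSystemWithBase V)

theorem span_simple_eq_top : Submodule.span ℝ (Set.range D.α) = ⊤ := by
  rw [eq_top_iff, ← D.root_span, Submodule.span_le]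
  have hcomb (c : Fin D.l → ℤ) :
      ∑ i, (c i : ℝ) • D.α i ∈ Submodule.span ℝ (Set.range D.α) :=
    Submodule.sum_mem _ fun i _ =>
      Submodule.smul_mem _ _ (Submodule.subset_span (Set.mem_range_self i))
  intro β hβ
  obtain ⟨c, -, rfl⟩ | ⟨c, -, rfl⟩ := D.base β hβ
  · exact hcomb c
  · exact Submodule.neg_mem _ (hcomb c)

/-- The simple roots as a basis of `V`; `D.simpleBasis.repr v i` is the coefficient of `αᵢ`
in `v`. -/
noncomputable def simpleBasis : Module.Basis (Fin D.l) ℝ V :=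
  Module.Basis.mk D.simple_indep D.span_simple_eq_top.ge

@[simp]
theorem simpleBasis_apply (i : Fin D.l) : D.simpleBasis i = D.α i :=
  Module.Basis.mk_apply _ _ i

@[simp]
theorem simpleBasis_repr_simple (i : Fin D.l) :
    D.simpleBasis.repr (D.α i) = Finsupp.single i 1 := by
  rw [← simpleBasis_apply, Module.Basis.repr_self]

theorem sum_simpleBasis_repr (v : V) : ∑ i, D.simpleBasis.repr v i • D.α i = v := by
  simpa using D.simpleBasis.sum_repr v

theorem simpleBasis_repr_sum (c : Fin D.l → ℝ) (i : Fin D.l) :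
    D.simpleBasis.repr (∑ j, c j • D.α j) i = c i := by
  simpa using congrFun (D.simpleBasis.repr_sum_self c) i

section Positivity

variable {D}

theorem isNonnegComb_iff {v : V} : D.IsNonnegComb v ↔ ∀ i, 0 ≤ D.simpleBasis.repr v i := by
  refine ⟨?_, fun h => ⟨_, h, (D.sum_simpleBasis_repr v).symm⟩⟩
  rintro ⟨c, hc, rfl⟩ i
  rw [simpleBasis_repr_sum]
  exact hc i

theorem IsPos.not_isPos_neg {v : V} (h : D.IsPos v) : ¬ D.IsPos (-v) := by
  intro hneg
  refine h.2 (D.simpleBasis.ext_elem fun i => ?_)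
  have hle := isNonnegComb_iff.mp hneg.1 i
  rw [map_neg, Finsupp.neg_apply, neg_nonneg] at hle
  simpa using le_antisymm hle (isNonnegComb_iff.mp h.1 i)

theorem isPos_or_isPos_neg {β : V} (hβ : β ∈ D.Φ) : D.IsPos β ∨ D.IsPos (-β) := by
  have hβ_ne := D.root_ne_zero β hβ
  obtain ⟨c, hc, hβc⟩ | ⟨c, hc, hβc⟩ := D.base β hβ
  · exact .inl ⟨⟨fun i => c i, fun i => Int.cast_nonneg (hc i), hβc⟩, hβ_ne⟩
  · exact .inr ⟨⟨fun i => c i, fun i => Int.cast_nonneg (hc i), neg_eq_iff_eq_neg.mpr hβc⟩,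
      neg_ne_zero.mpr hβ_ne⟩

variable (D) in
theorem isPos_simple (i : Fin D.l) : D.IsPos (D.α i) := by
  refine ⟨isNonnegComb_iff.mpr fun j => ?_, D.root_ne_zero _ (D.α_mem i)⟩
  rw [simpleBasis_repr_simple, Finsupp.single_apply]
  positivity

end Positivity

section Pairing

variable {D} {v β : V}

theorem pairing_pos_iff (hβ : β ≠ 0) : 0 < D.pairing v β ↔ 0 < ⟪v, β⟫ := by
  rw [pairing, div_pos_iff_of_pos_right (real_inner_self_pos.mpr hβ),
    mul_pos_iff_of_pos_left two_pos]

theorem pairing_nonneg_iff (hβ : β ≠ 0) : 0 ≤ D.pairing v β ↔ 0 ≤ ⟪v, β⟫ := by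
  rw [pairing, le_div_iff₀ (real_inner_self_pos.mpr hβ), zero_mul,
    mul_nonneg_iff_of_pos_left two_pos]

theorem pairing_eq_zero_iff (hβ : β ≠ 0) : D.pairing v β = 0 ↔ ⟪v, β⟫ = 0 := by
  simp [pairing, hβ]

theorem IsDominant.inner_simple_nonneg {ω : V} (hω : D.IsDominant ω) (i : Fin D.l) :
    0 ≤ ⟪ω, D.α i⟫ :=
  (pairing_nonneg_iff (D.root_ne_zero _ (D.α_mem i))).mp (hω i)

variable (D) in
theorem inner_eq_sum_repr_mul (ω v : V) :
    ⟪ω, v⟫ = ∑ i, D.simpleBasis.repr v i * ⟪ω, D.α i⟫ := by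
  conv_lhs => rw [← D.sum_simpleBasis_repr v]
  simp only [inner_sum, real_inner_smul_right]

theorem IsDominant.inner_nonneg {ω : V} (hω : D.IsDominant ω) (hv : D.IsNonnegComb v) :
    0 ≤ ⟪ω, v⟫ := by
  rw [D.inner_eq_sum_repr_mul]
  exact Finset.sum_nonneg fun i _ =>
    mul_nonneg (isNonnegComb_iff.mp hv i) (hω.inner_simple_nonneg i)

theorem IsMinuscule.pairing_eq_one {ω : V} (hω : D.IsMinuscule ω) (hβ : β ∈ D.Φ)
    (hpos : 0 < D.pairing ω β) : D.pairing ω β = 1 := by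
  obtain h | h | h := hω.2 β hβ <;> linarith

end Pairing

section SimpleReflection

theorem s_apply_eq_reflection (i : Fin D.l) (v : V) :
    D.s i v = (ℝ ∙ D.α i)ᗮ.reflection v := by
  rw [D.s_apply, Submodule.reflection_orthogonal_apply, Submodule.reflection_singleton_apply,
    real_inner_comm, real_inner_self_eq_norm_sq]
  simp [mul_div_assoc, mul_smul, two_smul]

theorem s_apply_self (i : Fin D.l) : D.s i (D.α i) = -D.α i := by
  rw [s_apply_eq_reflection, Submodule.reflection_orthogonalComplement_singleton_eq_neg]

theorem s_apply_s_apply (i : Fin D.l) (v : V) : D.s i (D.s i v) = v := by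
  simp only [s_apply_eq_reflection, Submodule.reflection_reflection]

theorem s_mul_self (i : Fin D.l) : D.s i * D.s i = 1 :=
  LinearEquiv.ext (D.s_apply_s_apply i)

theorem inner_s_apply_s_apply (i : Fin D.l) (x y : V) : ⟪D.s i x, D.s i y⟫ = ⟪x, y⟫ := by
  simp only [s_apply_eq_reflection, LinearIsometryEquiv.inner_map_map]

theorem s_apply_mem_iff (i : Fin D.l) {β : V} : D.s i β ∈ D.Φ ↔ β ∈ D.Φ :=
  ⟨fun h => by simpa only [s_apply_s_apply] using D.s_root _ h i, fun h => D.s_root β h i⟩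

theorem simpleBasis_repr_s_apply (j : Fin D.l) (v : V) (i : Fin D.l) :
    D.simpleBasis.repr (D.s j v) i =
      D.simpleBasis.repr v i - D.pairing v (D.α j) * Finsupp.single j 1 i := by
  rw [D.s_apply, map_sub, map_smul, simpleBasis_repr_simple, Finsupp.sub_apply, Finsupp.smul_apply,
    smul_eq_mul, pairing]

variable {D}

theorem IsPos.s_apply {β : V} (hpos : D.IsPos β) (hβ : β ∈ D.Φ) {j : Fin D.l}
    (hne : β ≠ D.α j) : D.IsPos (D.s j β) := by
  refine (isPos_or_isPos_neg (D.s_root β hβ j)).resolve_right fun hneg => ?_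
  have hzero (i : Fin D.l) (hij : i ≠ j) : D.simpleBasis.repr β i = 0 := by
    have hle := isNonnegComb_iff.mp hneg.1 i
    rw [map_neg, Finsupp.neg_apply, simpleBasis_repr_s_apply, Finsupp.single_eq_of_ne hij,
      mul_zero, sub_zero, neg_nonneg] at hle
    exact le_antisymm hle (isNonnegComb_iff.mp hpos.1 i)
  have hmul : β = D.simpleBasis.repr β j • D.α j := by
    conv_lhs => rw [← D.sum_simpleBasis_repr β]
    exact Finset.sum_eq_single j (fun i _ hij => by rw [hzero i hij, zero_smul]) (by simp)
  obtain hone | hneg_one := D.reduced _ (D.α_mem j) _ (hmul ▸ hβ)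
  · exact hne (by rw [hmul, hone, one_smul])
  · linarith [isNonnegComb_iff.mp hpos.1 j]

theorem pairwise_inner_simple_nonpos : Pairwise fun i j => ⟪D.α i, D.α j⟫ ≤ 0 := by
  intro i j hij
  have hpos : D.IsPos (D.s j (D.α i)) :=
    (D.isPos_simple i).s_apply (D.α_mem i) (D.simple_indep.injective.ne hij)
  have hcoeff := isNonnegComb_iff.mp hpos.1 j
  rw [simpleBasis_repr_s_apply, simpleBasis_repr_simple, Finsupp.single_eq_of_ne hij.symm,
    Finsupp.single_eq_same, mul_one, zero_sub, neg_nonneg] at hcoeff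
  exact not_lt.mp ((pairing_pos_iff (D.root_ne_zero _ (D.α_mem j))).not.mp hcoeff.not_gt)

theorem exists_repr_pos_inner_pos {v : V} (hv : ∃ i, 0 < D.simpleBasis.repr v i) :
    ∃ j, 0 < D.simpleBasis.repr v j ∧ 0 < ⟪v, D.α j⟫ := by
  simpa only [sum_simpleBasis_repr] using
    exists_pos_inner_pos_of_pairwise_inner_nonpos D.simple_indep pairwise_inner_simple_nonpos hv

end SimpleReflection

section WeylGroup

variable {D} {w : V ≃ₗ[ℝ] V}

variable (D) in
theorem s_mem_W (i : Fin D.l) : D.s i ∈ D.W :=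
  Subgroup.subset_closure (Set.mem_range_self i)

theorem inner_apply_apply (hw : w ∈ D.W) (x y : V) : ⟪w x, w y⟫ = ⟪x, y⟫ := by
  induction hw using Subgroup.closure_induction generalizing x y with
  | mem g hg =>
    obtain ⟨i, rfl⟩ := hg
    exact D.inner_s_apply_s_apply i x y
  | one => rfl
  | mul g h _ _ ihg ihh => exact (ihg _ _).trans (ihh x y)
  | inv g _ ih => exact (ih (g⁻¹ x) (g⁻¹ y)).symm.trans (by simp)

theorem apply_mem_iff (hw : w ∈ D.W) {β : V} : w β ∈ D.Φ ↔ β ∈ D.Φ := by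
  induction hw using Subgroup.closure_induction generalizing β with
  | mem g hg =>
    obtain ⟨i, rfl⟩ := hg
    exact D.s_apply_mem_iff i
  | one => rfl
  | mul g h _ _ ihg ihh => exact ihg.trans ihh
  | inv g _ ih => exact (ih (β := g⁻¹ β)).symm.trans (by simp)

theorem pairing_apply_apply (hw : w ∈ D.W) (x y : V) : D.pairing (w x) (w y) = D.pairing x y := by
  simp only [pairing, inner_apply_apply hw]

theorem IsMinuscule.pairing_apply_eq_one {ω β : V} (hω : D.IsMinuscule ω) (hw : w ∈ D.W)
    (hβ : β ∈ D.Φ) (hpos : 0 < D.pairing (w ω) β) : D.pairing (w ω) β = 1 := by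
  obtain ⟨γ, rfl⟩ := w.surjective β
  rw [pairing_apply_apply hw] at hpos ⊢
  exact hω.pairing_eq_one ((apply_mem_iff hw).mp hβ) hpos

theorem s_mul_eq_mul_s (hw : w ∈ D.W) {i j : Fin D.l} (h : w (D.α i) = D.α j) :
    D.s j * w = w * D.s i := by
  ext v
  simp only [LinearEquiv.mul_apply, D.s_apply, map_sub, map_smul, ← h, inner_apply_apply hw]

@[simp]
theorem wordProd_cons (i : Fin D.l) (L : List (Fin D.l)) :
    D.wordProd (i :: L) = D.s i * D.wordProd L := by
  simp [wordProd]

theorem wordProd_mem_W (L : List (Fin D.l)) : D.wordProd L ∈ D.W :=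
  D.W.list_prod_mem (by simp [s_mem_W])

theorem exists_wordProd_eq (hw : w ∈ D.W) : ∃ L, D.wordProd L = w := by
  induction hw using Subgroup.closure_induction_left with
  | one => exact ⟨[], rfl⟩
  | mul_left g hg h _ ih =>
    obtain ⟨i, rfl⟩ := hg
    obtain ⟨L, rfl⟩ := ih
    exact ⟨i :: L, wordProd_cons i L⟩
  | inv_mul_cancel g hg h _ ih =>
    obtain ⟨i, rfl⟩ := hg
    obtain ⟨L, rfl⟩ := ih
    exact ⟨i :: L, by rw [wordProd_cons, inv_eq_of_mul_eq_one_left (D.s_mul_self i)]⟩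

theorem exists_length_lt_wordProd_mul_s_eq {L : List (Fin D.l)} {i : Fin D.l}
    (h : ¬ D.IsPos (D.wordProd L (D.α i))) :
    ∃ M : List (Fin D.l), M.length < L.length ∧ D.wordProd M = D.wordProd L * D.s i := by
  induction L with
  | nil => exact absurd (D.isPos_simple i) h
  | cons j L ih =>
    by_cases hL : D.IsPos (D.wordProd L (D.α i))
    · have hroot : D.wordProd L (D.α i) ∈ D.Φ :=
        (apply_mem_iff (wordProd_mem_W L)).mpr (D.α_mem i)
      have hsimple : D.wordProd L (D.α i) = D.α j := by
        by_contra hne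
        exact h (by simpa using hL.s_apply hroot hne)
      refine ⟨L, by simp, ?_⟩
      rw [wordProd_cons, s_mul_eq_mul_s (wordProd_mem_W L) hsimple, mul_assoc, s_mul_self, mul_one]
    · obtain ⟨M, hlen, hM⟩ := ih hL
      exact ⟨j :: M, by simpa using hlen, by rw [wordProd_cons, wordProd_cons, hM, mul_assoc]⟩

theorem wordProd_eq_one_of_isPos (L : List (Fin D.l))
    (hpos : ∀ i, D.IsPos (D.wordProd L (D.α i))) : D.wordProd L = 1 := by
  obtain rfl | ⟨K, i, rfl⟩ := L.eq_nil_or_concat'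
  · rfl
  have hconcat : D.wordProd (K ++ [i]) = D.wordProd K * D.s i := by simp [wordProd]
  have hneg : D.IsPos (-D.wordProd K (D.α i)) := by
    simpa [hconcat, s_apply_self] using hpos i
  obtain ⟨M, hlen, hM⟩ :=
    exists_length_lt_wordProd_mul_s_eq fun h : D.IsPos (D.wordProd K (D.α i)) =>
      h.not_isPos_neg hneg
  rw [hconcat, ← hM] at hpos ⊢
  exact wordProd_eq_one_of_isPos M hpos
termination_by L.length
decreasing_by grind

theorem eq_one_of_isPos_apply_simple (hw : w ∈ D.W) (hpos : ∀ i, D.IsPos (w (D.α i))) :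
    w = 1 := by
  obtain ⟨L, rfl⟩ := exists_wordProd_eq hw
  exact wordProd_eq_one_of_isPos L hpos

end WeylGroup

section MinimalCosetRepresentatives

variable {D} {ω : V} {w w' : V ≃ₗ[ℝ] V}

variable (D) in
theorem one_mem_WI (ω : V) : (1 : V ≃ₗ[ℝ] V) ∈ D.WI ω :=
  ⟨D.W.one_mem, fun i _ => D.isPos_simple i⟩

theorem isPos_apply_of_mem_WI (hω : D.IsDominant ω) (hw : w ∈ D.WI ω) {β : V} (hβ : D.IsPos β)
    (horth : ⟪ω, β⟫ = 0) : D.IsPos (w β) := by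
  have hcoeff := isNonnegComb_iff.mp hβ.1
  refine ⟨isNonnegComb_iff.mpr fun k => ?_, w.map_ne_zero_iff.mpr hβ.2⟩
  have hterm : ∀ i, D.simpleBasis.repr β i * ⟪ω, D.α i⟫ = 0 := by
    rw [D.inner_eq_sum_repr_mul, Finset.sum_eq_zero_iff_of_nonneg fun i _ =>
      mul_nonneg (hcoeff i) (hω.inner_simple_nonneg i)] at horth
    exact fun i => horth i (Finset.mem_univ i)
  rw [← D.sum_simpleBasis_repr β]
  simp only [map_sum, map_smul, Finsupp.finsetSum_apply, Finsupp.smul_apply, smul_eq_mul]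
  refine Finset.sum_nonneg fun i _ => ?_
  obtain hzero | hzero := mul_eq_zero.mp (hterm i)
  · rw [hzero, zero_mul]
  · have hpair : D.pairing ω (D.α i) = 0 :=
      (pairing_eq_zero_iff (D.root_ne_zero _ (D.α_mem i))).mpr hzero
    exact mul_nonneg (hcoeff i) (isNonnegComb_iff.mp (hw.2 i hpair).1 k)

theorem eq_of_mem_WI_of_apply_eq (hω : D.IsDominant ω) (hw : w ∈ D.WI ω) (hw' : w' ∈ D.WI ω)
    (h : w ω = w' ω) : w = w' := by
  have hu : w⁻¹ * w' ∈ D.W := D.W.mul_mem (D.W.inv_mem hw.1) hw'.1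
  have hfix : (w⁻¹ * w') ω = ω := by
    rw [LinearEquiv.mul_apply, ← h]
    exact w.symm_apply_apply ω
  refine inv_mul_eq_one.mp (eq_one_of_isPos_apply_simple hu fun i => ?_)
  have hroot := (apply_mem_iff hu).mpr (D.α_mem i)
  refine (isPos_or_isPos_neg hroot).resolve_right fun hneg => ?_
  have hinner : ⟪ω, (w⁻¹ * w') (D.α i)⟫ = ⟪ω, D.α i⟫ := by
    conv_lhs => rw [← hfix]
    exact inner_apply_apply hu _ _
  have horth : ⟪ω, D.α i⟫ = 0 := by
    have hle := hω.inner_nonneg hneg.1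
    rw [inner_neg_right, hinner, neg_nonneg] at hle
    exact le_antisymm hle (hω.inner_simple_nonneg i)
  have hpos' : D.IsPos (w' (D.α i)) := isPos_apply_of_mem_WI hω hw' (D.isPos_simple i) horth
  have hneg' : D.IsPos (w (-(w⁻¹ * w') (D.α i))) :=
    isPos_apply_of_mem_WI hω hw hneg (by rw [inner_neg_right, hinner, horth, neg_zero])
  rw [map_neg, ← LinearEquiv.mul_apply, mul_inv_cancel_left] at hneg'
  exact hpos'.not_isPos_neg hneg'

theorem s_mul_mem_WI (hw : w ∈ D.WI ω) {j : Fin D.l} (hj : ⟪w ω, D.α j⟫ ≠ 0) :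
    D.s j * w ∈ D.WI ω := by
  refine ⟨D.W.mul_mem (D.s_mem_W j) hw.1, fun i hi => ?_⟩
  refine (hw.2 i hi).s_apply ((apply_mem_iff hw.1).mpr (D.α_mem i)) fun h => hj ?_
  rw [← h, inner_apply_apply hw.1]
  exact (pairing_eq_zero_iff (D.root_ne_zero _ (D.α_mem i))).mp hi

theorem IsMinuscule.exists_s_mul_mem_WI (hω : D.IsMinuscule ω) (hw : w ∈ D.WI ω)
    (hpos : ∃ i, 0 < D.simpleBasis.repr (w ω) i) :
    ∃ j, 0 < D.simpleBasis.repr (w ω) j ∧ D.s j * w ∈ D.WI ω ∧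
      (D.s j * w) ω = w ω - D.α j := by
  obtain ⟨j, hrepr, hinner⟩ := exists_repr_pos_inner_pos hpos
  have hpair : D.pairing (w ω) (D.α j) = 1 := hω.pairing_apply_eq_one hw.1 (D.α_mem j)
    ((pairing_pos_iff (D.root_ne_zero _ (D.α_mem j))).mpr hinner)
  refine ⟨j, hrepr, s_mul_mem_WI hw hinner.ne', ?_⟩
  rw [pairing] at hpair
  rw [LinearEquiv.mul_apply, D.s_apply, hpair, one_smul]

theorem IsMinuscule.exists_mem_WI_repr_eq_sub_ceil (hω : D.IsMinuscule ω) (hw : w ∈ D.WI ω)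
    (hnonneg : ∀ i, 0 ≤ ⌈D.simpleBasis.repr (w ω) i⌉) :
    ∃ w' ∈ D.WI ω, ∀ i, D.simpleBasis.repr (w' ω) i =
      D.simpleBasis.repr (w ω) i - ⌈D.simpleBasis.repr (w ω) i⌉ := by
  obtain ⟨n, hn⟩ := Int.eq_ofNat_of_zero_le
    (Finset.sum_nonneg fun i (_ : i ∈ Finset.univ) => hnonneg i)
  induction n generalizing w with
  | zero =>
    rw [Nat.cast_zero, Finset.sum_eq_zero_iff_of_nonneg fun i _ => hnonneg i] at hn
    exact ⟨w, hw, fun i => by rw [hn i (Finset.mem_univ i), Int.cast_zero, sub_zero]⟩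
  | succ n ih =>
    obtain ⟨i₀, -, hi₀⟩ : ∃ i ∈ Finset.univ, 0 < ⌈D.simpleBasis.repr (w ω) i⌉ :=
      Finset.exists_lt_of_sum_lt (by rw [Finset.sum_const_zero, hn]; positivity)
    obtain ⟨j, hj, hmem, happly⟩ := hω.exists_s_mul_mem_WI hw ⟨i₀, Int.ceil_pos.mp hi₀⟩
    have hrepr (i : Fin D.l) : D.simpleBasis.repr ((D.s j * w) ω) i =
        D.simpleBasis.repr (w ω) i - ((if i = j then 1 else 0 : ℤ) : ℝ) := by
      rw [happly]
      simp [Finsupp.single_apply, eq_comm]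
    have hceil (i : Fin D.l) : ⌈D.simpleBasis.repr ((D.s j * w) ω) i⌉ =
        ⌈D.simpleBasis.repr (w ω) i⌉ - if i = j then 1 else 0 := by
      rw [hrepr, Int.ceil_sub_intCast]
    have hnonneg' (i : Fin D.l) : 0 ≤ ⌈D.simpleBasis.repr ((D.s j * w) ω) i⌉ := by
      rw [hceil]
      obtain rfl | hij := eq_or_ne i j
      · simpa [Int.one_le_ceil_iff] using hj
      · simpa [hij] using hnonneg i
    have hsum : ∑ i, ⌈D.simpleBasis.repr ((D.s j * w) ω) i⌉ = n := by
      simp_rw [hceil, Finset.sum_sub_distrib, hn]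
      simp
    obtain ⟨w', hw', hw'_repr⟩ := ih hmem hnonneg' hsum
    refine ⟨w', hw', fun i => (hw'_repr i).trans ?_⟩
    rw [hceil, hrepr]
    push_cast
    ring

end MinimalCosetRepresentatives

end RootSystemWithBase

/-- Let `ω = ∑ m i • α i` be a minuscule weight with nonnegative
rational coefficients.  Then there is a unique `w ∈ W^I` with
`w(ω) = ∑ (m i − ⌈m i⌉) • α i`. -/
theorem stmt5 {V : Type*} [NormedAddCommGroup V] [InnerProductSpace ℝ V]
    (D : RootSystemWithBase V) (m : Fin D.l → ℚ) (hm : ∀ i, 0 ≤ m i)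
    (ω : V) (hω : ω = ∑ i, (m i : ℝ) • D.α i) (hmin : D.IsMinuscule ω) :
    ∃! w : V ≃ₗ[ℝ] V, w ∈ D.WI ω ∧
      w ω = ∑ i, ((m i : ℝ) - ((⌈m i⌉ : ℤ) : ℝ)) • D.α i := by
  have hcoeff (i : Fin D.l) : D.simpleBasis.repr ω i = m i := by
    rw [hω, D.simpleBasis_repr_sum]
  obtain ⟨w, hw, hw_repr⟩ := hmin.exists_mem_WI_repr_eq_sub_ceil (D.one_mem_WI ω) fun i => by
    simpa [hcoeff] using Int.ceil_nonneg (hm i)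
  have hwω : w ω = ∑ i, ((m i : ℝ) - ((⌈m i⌉ : ℤ) : ℝ)) • D.α i := by
    rw [← D.sum_simpleBasis_repr (w ω)]
    simp [hw_repr, hcoeff]
  exact ⟨w, ⟨hw, hwω⟩, fun w' hw' =>
    RootSystemWithBase.eq_of_mem_WI_of_apply_eq hmin.1 hw'.1 hw (hw'.2.trans hwω.symm)⟩
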